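/- Let K be a countably infinite field (with the discrete topology) and consider the K*-action on K̂ × K̂ given by a.(ξ₁, ξ₂) = (a*ξ₁, (a^{-1})*ξ₂) for a ∈ K*. This action has exactly four ergodic invariant Borel probability measures: δ₁ ⊗ δ₁, δ₁ ⊗ m_{K̂}, m_{K̂} ⊗ δ₁, and m_{K̂} ⊗ m_{K̂}, where δ₁ is the point mass at the trivial character. -/

import Mathlib

open MeasureTheory Filter

noncomputable section

/-- The Pontryagin dual of the additive group of `K`. -/
abbrev AddDual (K : Type*) [AddCommGroup K] [TopologicalSpace K] : Type _ :=
  PontryaginDual (Multiplicative K)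

/-- Precomposition of a character with an additive homomorphism. -/
def dualComp {A B : Type*} [AddCommGroup A] [AddCommGroup B]
    [TopologicalSpace A] [DiscreteTopology A] [TopologicalSpace B]
    (f : A →+ B) (ξ : AddDual B) : AddDual A :=
  ξ.comp ⟨AddMonoidHom.toMultiplicative f, continuous_of_discreteTopology⟩

/-- The dual action of multiplication by `a`: `(dualSmul a ξ) b = ξ (a * b)`. -/
def dualSmul {K : Type*} [Field K] [TopologicalSpace K] [DiscreteTopology K]
    (a : K) (ξ : AddDual K) : AddDual K :=
  dualComp (AddMonoidHom.mulLeft a) ξ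

/-- Ergodicity of a measure with respect to a family of transformations. -/
def IsErgodicFamily {X : Type*} [MeasurableSpace X] {ι : Sort*}
    (T : ι → X → X) (μ : Measure X) : Prop :=
  ∀ s : Set X, MeasurableSet s → (∀ i, T i ⁻¹' s = s) → μ s = 0 ∨ μ s = 1

set_option linter.unusedSectionVars false

lemma ext_of_family {Y ι : Type*} [TopologicalSpace Y] [PolishSpace Y] [MeasurableSpace Y]
    [BorelSpace Y] (e : ι → BoundedContinuousFunction Y ℂ)
    (h1 : ∃ i, e i = 1) (hmul : ∀ i j, ∃ k, e i * e j = e k) (hstar : ∀ i, ∃ k, star (e i) = e k)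
    (hsep : ∀ p q : Y, (∀ i, e i p = e i q) → p = q)
    (P Q : Measure Y) [IsFiniteMeasure P] [IsFiniteMeasure Q]
    (h : ∀ i, ∫ y, e i y ∂P = ∫ y, e i y ∂Q) : P = Q := by
  have hspan : ∀ g ∈ StarAlgebra.adjoin ℂ (Set.range e), g ∈ Submodule.span ℂ (Set.range e) := by
    intro g hg
    induction hg using StarAlgebra.adjoin_induction with
    | mem x hx => exact Submodule.subset_span hx
    | algebraMap r =>
      obtain ⟨i, hi⟩ := h1
      rw [Algebra.algebraMap_eq_smul_one, ← hi]
      exact Submodule.smul_mem _ _ (Submodule.subset_span ⟨i, rfl⟩)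
    | add x y _ _ hx hy => exact Submodule.add_mem _ hx hy
    | mul x y _ _ hx hy =>
      have := Submodule.mul_mem_mul hx hy
      rw [Submodule.span_mul_span] at this
      refine Submodule.span_mono ?_ this
      rintro _ ⟨_, ⟨i, rfl⟩, _, ⟨j, rfl⟩, rfl⟩
      obtain ⟨k, hk⟩ := hmul i j
      exact ⟨k, hk.symm⟩
    | star x hx0 hx =>
      clear hx0
      induction hx using Submodule.span_induction with
      | mem x hx =>
        obtain ⟨i, rfl⟩ := hx
        obtain ⟨k, hk⟩ := hstar i
        rw [hk]; exact Submodule.subset_span ⟨k, rfl⟩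
      | zero => simp
      | add x y _ _ hx' hy' => rw [star_add]; exact Submodule.add_mem _ hx' hy'
      | smul a x _ hx' => rw [star_smul]; exact Submodule.smul_mem _ _ hx'
  refine ext_of_forall_mem_subalgebra_integral_eq_of_polish (𝕜 := ℂ)
    (A := StarAlgebra.adjoin ℂ (Set.range e)) ?_ ?_
  · intro p q hpq
    by_contra hcon
    apply hpq
    apply hsep
    intro i
    by_contra hi
    apply hcon
    refine ⟨e i, ?_, hi⟩
    refine ⟨(e i).toContinuousMap, ?_, rfl⟩
    exact ⟨e i, StarAlgebra.subset_adjoin ℂ _ ⟨i, rfl⟩, rfl⟩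
  · intro g hg
    have := hspan g hg
    clear hg
    induction this using Submodule.span_induction with
    | mem x hx => obtain ⟨i, rfl⟩ := hx; exact h i
    | zero => simp
    | add x y hx0 hy0 hx hy =>
      simp only [BoundedContinuousFunction.coe_add, Pi.add_apply]
      rw [integral_add (x.integrable _) (y.integrable _), integral_add (x.integrable _) (y.integrable _),
        hx, hy]
    | smul a x _ hx => 
      simp only [BoundedContinuousFunction.coe_smul]
      rw [integral_smul, integral_smul, hx]

section
variable {K : Type*} [Field K] [Countable K] [TopologicalSpace K] [DiscreteTopology K]

instance dual_sct : SecondCountableTopology (AddDual K) := by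
  have : Countable (Multiplicative K) := ‹Countable K›
  have : DiscreteTopology (Multiplicative K) := ‹DiscreteTopology K›
  exact (ContinuousMonoidHom.isInducing_toContinuousMap (Multiplicative K) Circle).secondCountableTopology

instance dual_compact : CompactSpace (AddDual K) := by
  have : DiscreteTopology (Multiplicative K) := ‹DiscreteTopology K›
  infer_instance

instance dual_polish : PolishSpace (AddDual K) := by
  let _ := TopologicalSpace.metrizableSpaceMetric (AddDual K)
  infer_instance

/-- evaluation of a character, complex valued -/
def ev (x : K) (ξ : AddDual K) : ℂ := (ξ (Multiplicative.ofAdd x) : Circle)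

lemma continuous_ev (x : K) : Continuous (ev x) := by
  have h := (ContinuousMonoidHom.isInducing_toContinuousMap (Multiplicative K) Circle).continuous
  have h2 : Continuous fun f : C(Multiplicative K, Circle) => f (Multiplicative.ofAdd x) :=
    continuous_eval_const _
  exact continuous_subtype_val.comp (h2.comp h)

lemma ev_zero (ξ : AddDual K) : ev (0 : K) ξ = 1 := by
  simp [ev]

lemma ev_one (x : K) : ev x 1 = 1 := by
  simp [ev]

lemma ev_add (x y : K) (ξ : AddDual K) : ev (x + y) ξ = ev x ξ * ev y ξ := by
  simp [ev, ofAdd_add, map_mul]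

lemma ev_mul (x : K) (ξ η : AddDual K) : ev x (ξ * η) = ev x ξ * ev x η := by
  simp only [ev, ← Circle.coe_mul]; rfl

lemma ev_neg (x : K) (ξ : AddDual K) : ev (-x) ξ = star (ev x ξ) := by
  simp only [ev, ofAdd_neg, map_inv, Circle.coe_inv_eq_conj]; rfl

lemma norm_ev (x : K) (ξ : AddDual K) : ‖ev x ξ‖ = 1 := Circle.norm_coe _

lemma ev_sep (ξ η : AddDual K) (h : ∀ x : K, ev x ξ = ev x η) : ξ = η := by
  apply PontryaginDual.ext
  intro a
  exact Circle.ext (h (Multiplicative.toAdd a))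

lemma ev_dualSmul (a x : K) (ξ : AddDual K) : ev x (dualSmul a ξ) = ev (a * x) ξ := rfl

lemma continuous_dualSmul (a : K) : Continuous (dualSmul a : AddDual K → AddDual K) := by
  have : DiscreteTopology (Multiplicative K) := ‹DiscreteTopology K›
  exact (PontryaginDual.map ⟨AddMonoidHom.toMultiplicative (AddMonoidHom.mulLeft a), continuous_of_discreteTopology⟩).continuous_toFun

lemma exists_ev_ne_one (x : K) (hx : x ≠ 0) : ∃ ξ : AddDual K, ev x ξ ≠ 1 := by
  have : DiscreteTopology (Multiplicative K) := ‹DiscreteTopology K›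
  obtain ⟨c, hc⟩ := CharacterModule.exists_character_apply_ne_zero_of_ne_zero hx
  let j : AddCircle (1 : ℚ) →+ AddCircle (1 : ℝ) :=
    QuotientAddGroup.map _ _ (Rat.castHom ℝ : ℚ →+* ℝ).toAddMonoidHom (by
      rw [AddSubgroup.zmultiples_le]
      simp)
  have hj : Function.Injective j := by
    rw [injective_iff_map_eq_zero]
    intro q
    induction q using QuotientAddGroup.induction_on with
    | H q =>
    intro hq
    have hq' : ((q : ℝ) : AddCircle (1 : ℝ)) = 0 := hq
    rw [AddCircle.coe_eq_zero_iff] at hq'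
    obtain ⟨n, hn⟩ := hq'
    refine (AddCircle.coe_eq_zero_iff _).2 ⟨n, ?_⟩
    have : ((n : ℚ) : ℝ) = q := by simpa using hn
    simpa using (Rat.cast_injective this)
  let ψ : Multiplicative K →* Circle :=
    { toFun := fun a => AddCircle.toCircle (j (c (Multiplicative.toAdd a)))
      map_one' := by simp
      map_mul' := fun a b => by simp [AddCircle.toCircle_add] }
  refine ⟨(⟨ψ, continuous_of_discreteTopology⟩ : Multiplicative K →ₜ* Circle), fun h => hc ?_⟩
  have h' : AddCircle.toCircle (j (c x)) = 1 := Circle.ext h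
  rw [← AddCircle.toCircle_zero] at h'
  have := AddCircle.injective_toCircle one_ne_zero h'
  exact hj (by rw [this, map_zero])

/-- characters of the product -/
def ee (x y : K) (p : AddDual K × AddDual K) : ℂ := ev x p.1 * ev y p.2

lemma continuous_ee (x y : K) : Continuous (ee x y) :=
  ((continuous_ev x).comp continuous_fst).mul ((continuous_ev y).comp continuous_snd)

lemma norm_ee (x y : K) (p : AddDual K × AddDual K) : ‖ee x y p‖ = 1 := by
  simp [ee, norm_ev]

lemma ee_sub (x y x' y' : K) (p : AddDual K × AddDual K) :
    ee (x - x') (y - y') p = ee x y p * star (ee x' y' p) := by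
  simp only [ee, sub_eq_add_neg, ev_add, ev_neg, star_mul]; ring

lemma integrable_cont {Y : Type*} [TopologicalSpace Y] [CompactSpace Y] [MeasurableSpace Y]
    [BorelSpace Y] (P : Measure Y) [IsFiniteMeasure P] {E : Type*} [NormedAddCommGroup E]
    [SecondCountableTopology E] [MeasurableSpace E] [BorelSpace E] (f : Y → E)
    (hf : Continuous f) : Integrable f P :=
  (BoundedContinuousFunction.mkOfCompact ⟨f, hf⟩).integrable P

variable [MeasurableSpace (AddDual K)] [BorelSpace (AddDual K)]

lemma ext_dual (P Q : Measure (AddDual K)) [IsFiniteMeasure P] [IsFiniteMeasure Q]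
    (h : ∀ x : K, ∫ ξ, ev x ξ ∂P = ∫ ξ, ev x ξ ∂Q) : P = Q := by
  refine ext_of_family (fun x : K => BoundedContinuousFunction.mkOfCompact ⟨ev x, continuous_ev x⟩)
    ⟨0, ?_⟩ (fun i j => ⟨i + j, ?_⟩) (fun i => ⟨-i, ?_⟩) ?_ P Q h
  · ext p; exact ev_zero p
  · ext p; exact (ev_add _ _ p).symm
  · ext p; exact (ev_neg _ p).symm
  · intro p q h; exact ev_sep p q h

lemma ext_prod (P Q : Measure (AddDual K × AddDual K)) [IsFiniteMeasure P] [IsFiniteMeasure Q]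
    (h : ∀ x y : K, ∫ ξ, ee x y ξ ∂P = ∫ ξ, ee x y ξ ∂Q) : P = Q := by
  refine ext_of_family (fun x : K × K =>
      BoundedContinuousFunction.mkOfCompact ⟨ee x.1 x.2, continuous_ee x.1 x.2⟩)
    ⟨0, ?_⟩ (fun i j => ⟨i + j, ?_⟩) (fun i => ⟨-i, ?_⟩) ?_ P Q (fun i => h i.1 i.2)
  · ext p; simp [ee, ev_zero]
  · ext p; simp [ee, ev_add]; ring
  · ext p; simp [ee, ev_neg]
  · intro p q h
    refine Prod.ext (ev_sep _ _ fun x => ?_) (ev_sep _ _ fun x => ?_)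
    · simpa [ee, ev_zero] using h (x, 0)
    · simpa [ee, ev_zero] using h (0, x)

lemma bessel (θ : Measure (AddDual K × AddDual K)) [IsProbabilityMeasure θ]
    (g : AddDual K × AddDual K → ℂ) (hg : Measurable g) (hg1 : ∀ p, ‖g p‖ ≤ 1)
    {ι : Type*} (S : Finset ι) (c : ι → ℂ) (v w : ι → K) :
    ‖∑ i ∈ S, c i * ∫ p, g p * ee (v i) (w i) p ∂θ‖ ^ 2 ≤
      (∑ i ∈ S, ∑ j ∈ S, c i * star (c j) * ∫ p, ee (v i - v j) (w i - w j) p ∂θ).re := by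
  set h : AddDual K × AddDual K → ℂ := fun p => ∑ i ∈ S, c i * ee (v i) (w i) p with hh
  have hc : Continuous h := by
    refine continuous_finsetSum _ fun i _ => continuous_const.mul (continuous_ee _ _)
  have hgi : ∀ f : AddDual K × AddDual K → ℂ, Continuous f → Integrable (fun p => g p * f p) θ := by
    intro f hf
    exact (integrable_cont θ f hf).bdd_mul hg.aestronglyMeasurable (Eventually.of_forall hg1)
  have e1 : ∑ i ∈ S, c i * ∫ p, g p * ee (v i) (w i) p ∂θ = ∫ p, g p * h p ∂θ := by
    simp only [hh, Finset.mul_sum]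
    rw [integral_finsetSum]
    · refine Finset.sum_congr rfl fun i _ => ?_
      rw [← integral_const_mul]
      congr 1; ext p; ring
    · intro i _
      exact hgi _ (continuous_const.mul (continuous_ee _ _))
  have e2 : ∑ i ∈ S, ∑ j ∈ S, c i * star (c j) * ∫ p, ee (v i - v j) (w i - w j) p ∂θ
      = ((∫ p, ‖h p‖ ^ 2 ∂θ : ℝ) : ℂ) := by
    rw [← integral_complex_ofReal]
    have : ∀ p, ((‖h p‖ ^ 2 : ℝ) : ℂ) =
        ∑ i ∈ S, ∑ j ∈ S, c i * star (c j) * ee (v i - v j) (w i - w j) p := by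
      intro p
      push_cast
      rw [← Complex.mul_conj']
      simp only [hh, map_sum, Finset.sum_mul_sum, ee_sub]
      refine Finset.sum_congr rfl fun i _ => Finset.sum_congr rfl fun j _ => ?_
      simp; ring
    simp only [this]
    rw [integral_finsetSum]
    · refine Finset.sum_congr rfl fun i _ => ?_
      rw [integral_finsetSum]
      · refine Finset.sum_congr rfl fun j _ => ?_
        rw [integral_const_mul]
      · intro j _
        exact integrable_cont _ _ (continuous_const.mul (continuous_ee _ _))
    · intro i _
      exact integrable_cont _ _ (continuous_finsetSum _ fun j _ => (continuous_const.mul (continuous_ee _ _)))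
  rw [e1, e2, Complex.ofReal_re]
  have h1 : ‖∫ p, g p * h p ∂θ‖ ≤ ∫ p, ‖h p‖ ∂θ := by
    refine norm_integral_le_of_norm_le (integrable_cont _ _ hc.norm) (Eventually.of_forall fun p => ?_)
    rw [norm_mul]
    exact mul_le_of_le_one_left (norm_nonneg _) (hg1 p)
  set m := ∫ p, ‖h p‖ ∂θ with hm
  have h2 : 0 ≤ ∫ p, (‖h p‖ - m) ^ 2 ∂θ := integral_nonneg fun p => sq_nonneg _
  have h3 : ∫ p, (‖h p‖ - m) ^ 2 ∂θ = ∫ p, ‖h p‖ ^ 2 ∂θ - m ^ 2 := by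
    have : ∀ p, (‖h p‖ - m) ^ 2 = ‖h p‖ ^ 2 - (2 * m) * ‖h p‖ + m ^ 2 := fun p => by ring
    simp only [this]
    rw [integral_add, integral_sub, integral_const_mul, ← hm]
    · simp; ring
    all_goals exact integrable_cont _ _ (by fun_prop)
  have := pow_le_pow_left₀ (norm_nonneg _) h1 2
  linarith

lemma group_avg {G : Type*} [Group G] [Infinite G] (F : G → ℝ) (C : ℝ)
    (hF : Tendsto F cofinite (nhds 0)) (hF1 : ∀ r, F r ≤ 1)
    (h : ∀ S : Finset G, (S.card : ℝ) ^ 2 * C ≤ ∑ a ∈ S, ∑ b ∈ S, F (a * b⁻¹)) : C ≤ 0 := by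
  classical
  refine le_of_forall_pos_le_add fun ε hε => ?_
  have hev : ∀ᶠ r in cofinite, F r < ε / 2 := hF.eventually_lt_const (by positivity)
  have hfin : {r | ¬ F r < ε / 2}.Finite := hev
  set R := hfin.toFinset with hR
  have key : ∀ S : Finset G, (S.card : ℝ) ^ 2 * C ≤ S.card * (R.card + S.card * (ε / 2)) := by
    intro S
    refine (h S).trans ?_
    rw [Finset.sum_comm]
    have : ∀ b ∈ S, ∑ a ∈ S, F (a * b⁻¹) ≤ R.card + S.card * (ε / 2) := by
      intro b _
      calc ∑ a ∈ S, F (a * b⁻¹) ≤ ∑ a ∈ S, ((if a * b⁻¹ ∈ R then 1 else 0) + ε / 2) := by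
            refine Finset.sum_le_sum fun a _ => ?_
            split_ifs with hr
            · linarith [hF1 (a * b⁻¹)]
            · have : F (a * b⁻¹) < ε / 2 := by
                by_contra hcon
                exact hr (by simpa [hR] using hcon)
              linarith
        _ ≤ _ := by
            rw [Finset.sum_add_distrib, Finset.sum_const, nsmul_eq_mul, ← Finset.sum_filter]
            gcongr
            rw [Finset.sum_const, nsmul_eq_mul, mul_one]
            norm_cast
            refine Finset.card_le_card_of_injOn (fun a => a * b⁻¹) ?_ ?_
            · intro a ha
              exact (Finset.mem_filter.1 ha).2
            · intro a _ a' _ haa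
              exact mul_right_cancel haa
    refine (Finset.sum_le_sum this).trans ?_
    rw [Finset.sum_const, nsmul_eq_mul]
  obtain ⟨n, hn⟩ := exists_nat_gt (R.card / (ε / 2) : ℝ)
  obtain ⟨S, hS⟩ := Infinite.exists_subset_card_eq G (n + 1)
  have := key S
  rw [hS] at this
  rw [div_lt_iff₀ (by positivity)] at hn
  push_cast at this
  have hn0 : (0 : ℝ) < n + 1 := by positivity
  have h4 : ((n : ℝ) + 1) * C ≤ R.card + (n + 1) * (ε / 2) := by
    have : ((n : ℝ) + 1) * ((n + 1) * C) ≤ (n + 1) * (R.card + (n + 1) * (ε / 2)) := by linarith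
    exact le_of_mul_le_mul_left this hn0
  have h5 : ((n : ℝ) + 1) * C ≤ (n + 1) * ε := by nlinarith
  linarith [le_of_mul_le_mul_left h5 hn0]

/-- the transformation -/
def TT (a : Kˣ) : AddDual K × AddDual K → AddDual K × AddDual K :=
  Prod.map (dualSmul (a : K)) (dualSmul ((a⁻¹ : Kˣ) : K))

lemma continuous_TT (a : Kˣ) : Continuous (TT a) :=
  (continuous_dualSmul _).prodMap (continuous_dualSmul _)

lemma ee_TT (a : Kˣ) (x y : K) (p) : ee x y (TT a p) = ee (a * x) ((a⁻¹ : Kˣ) * y) p := rfl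

lemma phi_inv (θ : Measure (AddDual K × AddDual K)) (hinv : ∀ a : Kˣ, θ.map (TT a) = θ)
    (g : AddDual K × AddDual K → ℂ) (hg : Measurable g) (hgT : ∀ (a : Kˣ) p, g (TT a p) = g p)
    (a : Kˣ) (x y : K) :
    ∫ p, g p * ee (a * x) ((a⁻¹ : Kˣ) * y) p ∂θ = ∫ p, g p * ee x y p ∂θ := by
  conv_rhs => rw [← hinv a]
  rw [integral_map (continuous_TT a).measurable.aemeasurable]
  · simp only [ee_TT, hgT]
  · exact (hg.mul (continuous_ee _ _).measurable).aestronglyMeasurable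

lemma phi_inv' (θ : Measure (AddDual K × AddDual K)) (hinv : ∀ a : Kˣ, θ.map (TT a) = θ)
    (a : Kˣ) (x y : K) :
    ∫ p, ee (a * x) ((a⁻¹ : Kˣ) * y) p ∂θ = ∫ p, ee x y p ∂θ := by
  simpa using phi_inv θ hinv (fun _ => 1) measurable_const (fun _ _ => rfl) a x y

lemma norm_phi_le (θ : Measure (AddDual K × AddDual K)) [IsProbabilityMeasure θ] (x y : K) :
    ‖∫ p, ee x y p ∂θ‖ ≤ 1 := by
  simpa using norm_integral_le_of_norm_le_const (μ := θ) (C := 1)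
    (Eventually.of_forall fun p => (norm_ee x y p).le)

instance units_infinite [Infinite K] : Infinite Kˣ := by
  have : Infinite {x : K // x ≠ 0} := (Set.finite_singleton (0 : K)).infinite_compl.to_subtype
  exact (unitsEquivNeZero (G₀ := K)).symm.infinite_iff.1 this

lemma orbit_zero [Infinite K] (θ : Measure (AddDual K × AddDual K)) [IsProbabilityMeasure θ]
    (hinv : ∀ a : Kˣ, θ.map (TT a) = θ)
    (g : AddDual K × AddDual K → ℂ) (hg : Measurable g) (hg1 : ∀ p, ‖g p‖ ≤ 1)
    (hgT : ∀ (a : Kˣ) p, g (TT a p) = g p) (x y : K)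
    (hF : Tendsto (fun r : Kˣ => ‖∫ p, ee ((r - 1) * x) (((r⁻¹ : Kˣ) - 1) * y) p ∂θ‖)
      cofinite (nhds 0)) :
    ∫ p, g p * ee x y p ∂θ = 0 := by
  have := group_avg _ (‖∫ p, g p * ee x y p ∂θ‖ ^ 2) hF (fun r => norm_phi_le _ _ _) ?_
  · have h0 : ‖∫ p, g p * ee x y p ∂θ‖ ^ 2 = 0 := le_antisymm this (sq_nonneg _)
    simpa using h0
  · intro S
    have hb := bessel θ g hg hg1 S (fun _ => 1) (fun a : Kˣ => a * x) (fun a : Kˣ => (a⁻¹ : Kˣ) * y)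
    simp only [one_mul, phi_inv θ hinv g hg hgT, Finset.sum_const, nsmul_eq_mul, norm_mul,
      mul_pow, star_one] at hb
    simp only [Complex.norm_natCast] at hb
    refine hb.trans ((Complex.re_le_norm _).trans ((norm_sum_le _ _).trans
      (Finset.sum_le_sum fun a _ => (norm_sum_le _ _).trans (Finset.sum_le_sum fun b _ => ?_))))
    rw [← phi_inv' θ hinv b⁻¹]
    refine le_of_eq ?_
    congr 3
    ext p
    congr 1
    · push_cast
      field_simp [inv_inv]
    · push_cast
      field_simp [inv_inv]

lemma both_zero [Infinite K] (θ : Measure (AddDual K × AddDual K)) [IsProbabilityMeasure θ]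
    (hinv : ∀ a : Kˣ, θ.map (TT a) = θ) (hx0 : ∀ x : K, x ≠ 0 → ∫ p, ee x 0 p ∂θ = 0)
    (x y : K) (hx : x ≠ 0) (hy : y ≠ 0) : ∫ p, ee x y p ∂θ = 0 := by
  classical
  set f : K → ℂ := fun t => ∫ p, ee t 1 p ∂θ with hf
  have hfxy : ∀ x y : K, y ≠ 0 → ∫ p, ee x y p ∂θ = f (x * y) := by
    intro x y hy
    rw [← phi_inv' θ hinv (Units.mk0 y hy)]
    simp [hf, hy, mul_comm]
  have hsum : Summable fun t => ‖f t‖ ^ 2 := by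
    refine summable_of_sum_le (c := 1) (fun _ => sq_nonneg _) fun S => ?_
    have hb := bessel θ (ee 0 1) (continuous_ee _ _).measurable (fun p => (norm_ee _ _ p).le) S
      (fun t => star (f t)) (fun t => t) (fun _ => 0)
    have e1 : ∀ t, ∫ p, ee 0 1 p * ee t 0 p ∂θ = f t := by
      intro t
      simp only [hf]
      congr 1; ext p; simp [ee, ev_zero, mul_comm]
    have e2 : ∀ i j, ∫ p, ee (i - j) ((0 : K) - 0) p ∂θ = if i = j then 1 else 0 := by
      intro i j
      split_ifs with hij
      · subst hij; simp [ee, ev_zero]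
      · rw [sub_zero]; exact hx0 _ (sub_ne_zero.2 hij)
    simp only [e1, e2, mul_ite, mul_one, mul_zero, Finset.sum_ite_eq, star_star] at hb
    have e3 : ∀ t, star (f t) * f t = ((‖f t‖ ^ 2 : ℝ) : ℂ) := by
      intro t
      push_cast
      exact Complex.conj_mul' _
    have e4 : ∑ i ∈ S, (if i ∈ S then star (f i) * f i else 0) = ((∑ i ∈ S, ‖f i‖ ^ 2 : ℝ) : ℂ) := by
      push_cast
      refine Finset.sum_congr rfl fun i hi => ?_
      rw [if_pos hi, e3]; push_cast; rfl
    rw [e4] at hb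
    simp only [e3, ← Complex.ofReal_sum, Complex.norm_real, Complex.ofReal_re, Real.norm_eq_abs,
      sq_abs] at hb
    nlinarith
  have hf0 : Tendsto (fun t => ‖f t‖) cofinite (nhds 0) := by
    have := hsum.tendsto_cofinite_zero.sqrt
    simpa using this
  have hq : Tendsto (fun r : Kˣ => ((r : K) - 1) * x * ((((r⁻¹ : Kˣ) : K) - 1) * y))
      cofinite cofinite := by
    refine Filter.Tendsto.cofinite_of_finite_preimage_singleton fun b => ?_
    let P : Polynomial K := Polynomial.C (x * y) * (Polynomial.X - 1) ^ 2 + Polynomial.C b * Polynomial.X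
    have hP : P ≠ 0 := by
      intro h
      have : P.eval 0 = 0 := by rw [h]; simp
      simp [P, hx, hy] at this
    refine Set.Finite.subset ((Polynomial.finite_setOfPred_isRoot hP).preimage
      (f := fun r : Kˣ => (r : K)) Units.val_injective.injOn) ?_
    intro r hr
    have hr' : ((r : K) - 1) * x * ((((r⁻¹ : Kˣ) : K) - 1) * y) = b := hr
    have hr0 : (r : K) * ((r⁻¹ : Kˣ) : K) = 1 := by simp
    simp only [Set.mem_preimage, Set.mem_ofPred_eq, Polynomial.IsRoot, P]
    simp
    rw [← hr']
    linear_combination ((r : K) - 1) * x * y * hr0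
  have := orbit_zero θ hinv (fun _ => 1) measurable_const (by simp) (fun _ _ => rfl) x y ?_
  · simpa using this
  · refine (hf0.comp hq).congr' ?_
    have : ∀ᶠ r : Kˣ in cofinite, r ≠ 1 := (Set.finite_singleton (1 : Kˣ)).compl_mem_cofinite
    filter_upwards [this] with r hr
    simp only [Function.comp]
    rw [hfxy]
    refine mul_ne_zero (sub_ne_zero.2 fun h => hr ?_) hy
    have : r⁻¹ = 1 := Units.ext h
    simpa using this

lemma ergodic_of_pattern [Infinite K] (θ : Measure (AddDual K × AddDual K)) [IsProbabilityMeasure θ]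
    (h01 : ∀ x y, ∫ p, ee x y p ∂θ = 0 ∨ ∀ᵐ p ∂θ, ee x y p = 1)
    (hpat : ∀ x y x' y' : K, (x = 0 ↔ x' = 0) → (y = 0 ↔ y' = 0) →
      ∫ p, ee x y p ∂θ = ∫ p, ee x' y' p ∂θ) :
    (∀ a : Kˣ, θ.map (TT a) = θ) ∧ IsErgodicFamily (fun a : Kˣ => TT a) θ := by
  have hinv : ∀ a : Kˣ, θ.map (TT a) = θ := by
    intro a
    have := Measure.isProbabilityMeasure_map (μ := θ) (continuous_TT a).measurable.aemeasurable
    refine ext_prod _ _ fun x y => ?_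
    rw [integral_map (continuous_TT a).measurable.aemeasurable
      (continuous_ee _ _).aestronglyMeasurable]
    simp only [ee_TT]
    exact hpat _ _ _ _ (by simp) (by simp)
  refine ⟨hinv, fun s hs hsT => ?_⟩
  have hres : θ.restrict s = (θ s) • θ := by
    have : IsFiniteMeasure (θ s • θ) := Measure.smul_finite θ (measure_ne_top θ s)
    refine ext_prod _ _ fun x y => ?_
    rw [integral_smul_measure]
    rcases h01 x y with h | h
    · rw [h, smul_zero, ← integral_indicator hs]
      have := orbit_zero θ hinv (s.indicator fun _ => 1) (measurable_const.indicator hs) ?_ ?_ x y ?_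
      · rw [← this]
        congr 1; ext p
        by_cases hp : p ∈ s <;> simp [hp]
      · intro p
        by_cases hp : p ∈ s <;> simp [hp]
      · intro a p
        have : TT a p ∈ s ↔ p ∈ s := by
          conv_rhs => rw [← hsT a]
          rfl
        by_cases hp : p ∈ s <;> simp [hp, this]
      · refine tendsto_const_nhds.congr' ?_
        have : ∀ᶠ r : Kˣ in cofinite, r ≠ 1 := (Set.finite_singleton (1 : Kˣ)).compl_mem_cofinite
        filter_upwards [this] with r hr
        rw [hpat _ _ x y, h, norm_zero]
        · have : (r : K) - 1 ≠ 0 := sub_ne_zero.2 fun h => hr (Units.ext h)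
          simp [this]
        · have : ((r⁻¹ : Kˣ) : K) - 1 ≠ 0 := sub_ne_zero.2 fun h => hr (by
            have : r⁻¹ = 1 := Units.ext h
            simpa using this)
          simp only [mul_eq_zero, this, false_or]
    · rw [integral_congr_ae h, integral_congr_ae (ae_restrict_of_ae h)]
      simp [Measure.real]
  have h2 := congrArg (fun μ => μ s) hres
  simp only [Measure.restrict_apply_self, Measure.smul_apply, smul_eq_mul] at h2
  by_cases h0 : θ s = 0
  · exact Or.inl h0
  · right
    have := ENNReal.mul_right_inj h0 (measure_ne_top θ s) (b := 1) (c := θ s)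
    rw [mul_one] at this
    exact (this.1 h2).symm

lemma haar_ev (mK : Measure (AddDual K)) [mK.IsHaarMeasure] (x : K) (hx : x ≠ 0) :
    ∫ ξ, ev x ξ ∂mK = 0 := by
  obtain ⟨η, hη⟩ := exists_ev_ne_one x hx
  have := integral_mul_left_eq_self (μ := mK) (ev x) η
  simp only [ev_mul, integral_const_mul] at this
  have h2 : (ev x η - 1) * ∫ ξ, ev x ξ ∂mK = 0 := by rw [sub_mul, this]; ring
  exact (mul_eq_zero.1 h2).resolve_left (sub_ne_zero.2 hη)

lemma prod_ee (μ ν : Measure (AddDual K)) [IsProbabilityMeasure μ] [IsProbabilityMeasure ν]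
    (x y : K) : ∫ p, ee x y p ∂(μ.prod ν) = (∫ ξ, ev x ξ ∂μ) * ∫ ξ, ev y ξ ∂ν := by
  simp only [ee]
  exact integral_prod_mul _ _

lemma dirac_ev (x : K) : ∫ ξ, ev x ξ ∂(Measure.dirac (1 : AddDual K)) = 1 := by
  rw [integral_dirac, ev_one]

lemma haar_ev_ite [DecidableEq K] (mK : Measure (AddDual K)) [mK.IsHaarMeasure]
    [IsProbabilityMeasure mK] (x : K) :
    ∫ ξ, ev x ξ ∂mK = if x = 0 then 1 else 0 := by
  split_ifs with h
  · subst h; simp [ev_zero]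
  · exact haar_ev mK x h

/-- a function of norm one with integral one is almost everywhere one -/
lemma ae_one_of_integral (θ : Measure (AddDual K × AddDual K)) [IsProbabilityMeasure θ] (x y : K)
    (h : ∫ p, ee x y p ∂θ = 1) : ∀ᵐ p ∂θ, ee x y p = 1 := by
  have hi := integrable_cont θ _ (continuous_ee x y)
  have hir : Integrable (fun p => (ee x y p).re) θ := hi.re
  have h1 : ∫ p, (1 - (ee x y p).re) ∂θ = 0 := by
    rw [integral_sub (integrable_const _) hir]
    have := integral_re hi
    simp only [RCLike.re_to_complex] at this
    rw [this, h]; simp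
  have hle : ∀ p : AddDual K × AddDual K, (ee x y p).re ≤ 1 := fun p =>
    (Complex.re_le_norm _).trans (norm_ee x y p).le
  rw [integral_eq_zero_iff_of_nonneg (fun p => sub_nonneg.2 (hle p))
    ((integrable_const _).sub hir)] at h1
  filter_upwards [h1] with p hp
  have hre : (ee x y p).re = 1 := by
    have : 1 - (ee x y p).re = 0 := hp
    linarith
  have hn := norm_ee x y p
  have hn2 : (ee x y p).re * (ee x y p).re + (ee x y p).im * (ee x y p).im = 1 := by
    rw [← Complex.normSq_apply, Complex.normSq_eq_norm_sq, hn]; norm_num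
  apply Complex.ext
  · simpa using hre
  · simp only [Complex.one_im]
    rw [hre] at hn2
    nlinarith

lemma ergodic_of_prod [Infinite K] (μ ν : Measure (AddDual K)) [IsProbabilityMeasure μ]
    [IsProbabilityMeasure ν]
    (hμ : ∀ x : K, ∫ ξ, ev x ξ ∂μ = 0 ∨ ∫ ξ, ev x ξ ∂μ = 1)
    (hν : ∀ x : K, ∫ ξ, ev x ξ ∂ν = 0 ∨ ∫ ξ, ev x ξ ∂ν = 1)
    (hμ2 : ∀ x x' : K, (x = 0 ↔ x' = 0) → ∫ ξ, ev x ξ ∂μ = ∫ ξ, ev x' ξ ∂μ)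
    (hν2 : ∀ x x' : K, (x = 0 ↔ x' = 0) → ∫ ξ, ev x ξ ∂ν = ∫ ξ, ev x' ξ ∂ν) :
    (∀ a : Kˣ, (μ.prod ν).map (TT a) = μ.prod ν) ∧
      IsErgodicFamily (fun a : Kˣ => TT a) (μ.prod ν) := by
  refine ergodic_of_pattern _ (fun x y => ?_) (fun x y x' y' hx hy => ?_)
  · rcases hμ x with h | h
    · left; rw [prod_ee, h, zero_mul]
    · rcases hν y with h' | h'
      · left; rw [prod_ee, h', mul_zero]
      · right; apply ae_one_of_integral; rw [prod_ee, h, h', one_mul]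
  · rw [prod_ee, prod_ee, hμ2 x x' hx, hν2 y y' hy]

lemma marginal [Infinite K] (mK : Measure (AddDual K)) [mK.IsHaarMeasure] [IsProbabilityMeasure mK]
    (μ : Measure (AddDual K)) [IsProbabilityMeasure μ]
    (hc : ∀ x y : K, x ≠ 0 → y ≠ 0 → ∫ ξ, ev x ξ ∂μ = ∫ ξ, ev y ξ ∂μ) (h1 : μ {1} = 0)
    (x : K) (hx : x ≠ 0) : ∫ ξ, ev x ξ ∂μ = 0 := by
  classical
  set c := ∫ ξ, ev x ξ ∂μ with hcdef
  have hreal : star c = c := by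
    have h := hc (-x) x (neg_ne_zero.2 hx) hx
    simp only [ev_neg] at h
    exact (integral_conj (f := ev x) (μ := μ)).symm.trans h
  have hc0 : c = (c.re : ℂ) := by
    have := Complex.conj_eq_iff_re.1 hreal
    exact this.symm
  have hle : c.re ≤ 1 := by
    refine (Complex.re_le_norm _).trans ?_
    simpa using norm_integral_le_of_norm_le_const (μ := μ) (C := 1)
      (Eventually.of_forall fun p => (norm_ev x p).le)
  have hdd : ∀ i j : K, ∫ p, ee (i - j) ((0 : K) - 0) p ∂(μ.prod (Measure.dirac 1)) =
      (if i = j then (1 - c) else 0) + c := by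
    intro i j
    rw [prod_ee, dirac_ev, mul_one]
    split_ifs with h
    · subst h; simp [ev_zero]
    · rw [hc _ x (sub_ne_zero.2 h) hx, zero_add]
  have hpos : 0 ≤ c.re := by
    by_contra hneg
    push Not at hneg
    obtain ⟨n, hn⟩ := exists_nat_gt ((1 - c.re) / (-c.re))
    obtain ⟨S, hS⟩ := Infinite.exists_subset_card_eq K (n + 1)
    have hb := bessel (μ.prod (Measure.dirac 1)) (fun _ => 0) measurable_const (by simp) S
      (fun _ => 1) (fun t : K => t) (fun _ => 0)
    simp only [hdd, star_one, one_mul, zero_mul, integral_zero, mul_zero, Finset.sum_const_zero,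
      norm_zero, Finset.sum_add_distrib, Finset.sum_ite_eq, Finset.sum_ite_mem, Finset.inter_self,
      Finset.sum_const, hS, nsmul_eq_mul] at hb
    rw [hc0] at hb
    rw [div_lt_iff₀ (by linarith)] at hn
    norm_cast at hb
    push_cast at hb
    have hn0 : (0 : ℝ) ≤ n := Nat.cast_nonneg n
    nlinarith
  have heq : μ = ENNReal.ofReal (1 - c.re) • mK + ENNReal.ofReal c.re • Measure.dirac 1 := by
    have i1 : IsFiniteMeasure (ENNReal.ofReal (1 - c.re) • mK) := Measure.smul_finite _ (by simp)
    have i2 : IsFiniteMeasure (ENNReal.ofReal c.re • Measure.dirac (1 : AddDual K)) :=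
      Measure.smul_finite _ (by simp)
    refine ext_dual _ _ fun z => ?_
    rw [integral_add_measure (integrable_cont _ _ (continuous_ev z))
      (integrable_cont _ _ (continuous_ev z)), integral_smul_measure, integral_smul_measure,
      dirac_ev, haar_ev_ite mK, ENNReal.toReal_ofReal hpos, ENNReal.toReal_ofReal (by linarith)]
    split_ifs with hz
    · subst hz; simp [ev_zero]
    · rw [hc z x hz hx, ← hcdef]; simpa using hc0
  rw [heq] at h1
  simp at h1
  have : c.re = 0 := le_antisymm h1.2 hpos
  rw [hc0, this]; simp

lemma dualSmul_eq_one (a : Kˣ) (ξ : AddDual K) : dualSmul (a : K) ξ = 1 ↔ ξ = 1 := by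
  constructor
  · intro h
    refine ev_sep _ _ fun x => ?_
    have := congrArg (ev ((a⁻¹ : Kˣ) * x)) h
    rw [ev_dualSmul] at this
    simpa [ev_one] using this
  · rintro rfl
    refine ev_sep _ _ fun x => ?_
    rw [ev_dualSmul, ev_one, ev_one]

lemma forward [Infinite K] (mK : Measure (AddDual K)) [mK.IsHaarMeasure] [IsProbabilityMeasure mK]
    (θ : Measure (AddDual K × AddDual K)) [IsProbabilityMeasure θ]
    (hinv : ∀ a : Kˣ, θ.map (TT a) = θ) (herg : IsErgodicFamily (fun a : Kˣ => TT a) θ) :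
    θ = (Measure.dirac 1).prod (Measure.dirac 1) ∨ θ = (Measure.dirac 1).prod mK ∨
        θ = mK.prod (Measure.dirac 1) ∨ θ = mK.prod mK := by
  classical
  have hfst : ∀ x : K, ∫ ξ, ev x ξ ∂(θ.map Prod.fst) = ∫ p, ee x 0 p ∂θ := by
    intro x
    rw [integral_map measurable_fst.aemeasurable (continuous_ev x).aestronglyMeasurable]
    simp [ee, ev_zero]
  have hsnd : ∀ x : K, ∫ ξ, ev x ξ ∂(θ.map Prod.snd) = ∫ p, ee 0 x p ∂θ := by
    intro x
    rw [integral_map measurable_snd.aemeasurable (continuous_ev x).aestronglyMeasurable]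
    simp [ee, ev_zero]
  have i1 := Measure.isProbabilityMeasure_map (μ := θ) (f := Prod.fst) measurable_fst.aemeasurable
  have i2 := Measure.isProbabilityMeasure_map (μ := θ) (f := Prod.snd) measurable_snd.aemeasurable
  have H1 : (∀ x : K, x ≠ 0 → ∫ p, ee x 0 p ∂θ = 0) ∨ ∀ᵐ p ∂θ, p.1 = 1 := by
    have hm : MeasurableSet (Prod.fst ⁻¹' {1} : Set (AddDual K × AddDual K)) :=
      measurable_fst (measurableSet_singleton _)
    rcases herg _ hm (fun a => by ext p; exact dualSmul_eq_one a p.1) with h | h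
    · left
      intro x hx
      rw [← hfst]
      refine marginal mK _ (fun x y hx hy => ?_) ?_ x hx
      · rw [hfst, hfst, ← phi_inv' θ hinv (Units.mk0 (x / y) (div_ne_zero hx hy)) y]
        simp [hy]
      · rwa [Measure.map_apply measurable_fst (measurableSet_singleton _)]
    · right
      exact (mem_ae_iff_prob_eq_one hm).2 h
  have H2 : (∀ x : K, x ≠ 0 → ∫ p, ee 0 x p ∂θ = 0) ∨ ∀ᵐ p ∂θ, p.2 = 1 := by
    have hm : MeasurableSet (Prod.snd ⁻¹' {1} : Set (AddDual K × AddDual K)) :=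
      measurable_snd (measurableSet_singleton _)
    rcases herg _ hm (fun a => by ext p; exact dualSmul_eq_one a⁻¹ p.2) with h | h
    · left
      intro x hx
      rw [← hsnd]
      refine marginal mK _ (fun x y hx hy => ?_) ?_ x hx
      · rw [hsnd, hsnd, ← phi_inv' θ hinv (Units.mk0 (y / x) (div_ne_zero hy hx)) 0 y]
        simp [hy]
      · rwa [Measure.map_apply measurable_snd (measurableSet_singleton _)]
    · right
      exact (mem_ae_iff_prob_eq_one hm).2 h
  have h00 : ∫ p, ee (0 : K) 0 p ∂θ = 1 := by simp [ee, ev_zero]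
  have A1 : (∀ᵐ p ∂θ, p.1 = 1) → ∀ x y : K, ∫ p, ee x y p ∂θ = ∫ p, ee 0 y p ∂θ := by
    intro h x y
    refine integral_congr_ae ?_
    filter_upwards [h] with p hp
    simp [ee, hp, ev_one]
  have A2 : (∀ᵐ p ∂θ, p.2 = 1) → ∀ x y : K, ∫ p, ee x y p ∂θ = ∫ p, ee x 0 p ∂θ := by
    intro h x y
    refine integral_congr_ae ?_
    filter_upwards [h] with p hp
    simp [ee, hp, ev_one]
  rcases H1 with h1 | h1
  · rcases H2 with h2 | h2
    · right; right; right
      refine ext_prod _ _ fun x y => ?_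
      rw [prod_ee, haar_ev_ite, haar_ev_ite]
      by_cases hx : x = 0
      · by_cases hy : y = 0
        · simp [hx, hy, h00]
        · simp [hx, hy, h2 y hy]
      · by_cases hy : y = 0
        · simp [hx, hy, h1 x hx]
        · simp [hx, hy, both_zero θ hinv h1 x y hx hy]
    · right; right; left
      refine ext_prod _ _ fun x y => ?_
      rw [prod_ee, haar_ev_ite, dirac_ev, A2 h2]
      by_cases hx : x = 0
      · simp [hx, h00]
      · simp [hx, h1 x hx]
  · rcases H2 with h2 | h2
    · right; left
      refine ext_prod _ _ fun x y => ?_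
      rw [prod_ee, haar_ev_ite mK, dirac_ev, A1 h1]
      by_cases hx : y = 0
      · simp [hx, h00]
      · simp [hx, h2 y hx]
    · left
      refine ext_prod _ _ fun x y => ?_
      rw [prod_ee, dirac_ev, dirac_ev, A1 h1, A2 h2, h00, one_mul]

lemma backward [Infinite K] (mK : Measure (AddDual K)) [mK.IsHaarMeasure] [IsProbabilityMeasure mK]
    (θ : Measure (AddDual K × AddDual K))
    (h : θ = (Measure.dirac 1).prod (Measure.dirac 1) ∨ θ = (Measure.dirac 1).prod mK ∨
        θ = mK.prod (Measure.dirac 1) ∨ θ = mK.prod mK) :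
    (∀ a : Kˣ, θ.map (TT a) = θ) ∧ IsErgodicFamily (fun a : Kˣ => TT a) θ := by
  classical
  have d1 : ∀ x : K, ∫ ξ, ev x ξ ∂(Measure.dirac (1 : AddDual K)) = 0 ∨
      ∫ ξ, ev x ξ ∂(Measure.dirac (1 : AddDual K)) = 1 := fun x => Or.inr (dirac_ev x)
  have d2 : ∀ x x' : K, (x = 0 ↔ x' = 0) → ∫ ξ, ev x ξ ∂(Measure.dirac (1 : AddDual K)) =
      ∫ ξ, ev x' ξ ∂(Measure.dirac (1 : AddDual K)) := fun x x' _ => by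
    rw [dirac_ev, dirac_ev]
  have m1 : ∀ x : K, ∫ ξ, ev x ξ ∂mK = 0 ∨ ∫ ξ, ev x ξ ∂mK = 1 := fun x => by
    rw [haar_ev_ite]; split_ifs <;> simp
  have m2 : ∀ x x' : K, (x = 0 ↔ x' = 0) → ∫ ξ, ev x ξ ∂mK = ∫ ξ, ev x' ξ ∂mK := fun x x' h => by
    rw [haar_ev_ite, haar_ev_ite]; simp only [h]
  rcases h with rfl | rfl | rfl | rfl
  · exact ergodic_of_prod _ _ d1 d1 d2 d2
  · exact ergodic_of_prod _ _ d1 m1 d2 m2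
  · exact ergodic_of_prod _ _ m1 d1 m2 d2
  · exact ergodic_of_prod _ _ m1 m1 m2 m2

end

/-- The `K^*`-action `a.(ξ₁, ξ₂) = (a* ξ₁, (a⁻¹)* ξ₂)` on `K̂ × K̂` has exactly four
ergodic invariant Borel probability measures. -/
theorem statement1
    {K : Type*} [Field K] [Countable K] [Infinite K]
    [TopologicalSpace K] [DiscreteTopology K]
    [MeasurableSpace (AddDual K)] [BorelSpace (AddDual K)]
    (mK : Measure (AddDual K)) [mK.IsHaarMeasure] [IsProbabilityMeasure mK]
    (θ : Measure (AddDual K × AddDual K)) [IsProbabilityMeasure θ] :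
    ((∀ a : Kˣ,
        θ.map (Prod.map (dualSmul (a : K)) (dualSmul ((a⁻¹ : Kˣ) : K))) = θ) ∧
      IsErgodicFamily
        (fun a : Kˣ => Prod.map (dualSmul (a : K)) (dualSmul ((a⁻¹ : Kˣ) : K))) θ)
    ↔ (θ = (Measure.dirac 1).prod (Measure.dirac 1) ∨
        θ = (Measure.dirac 1).prod mK ∨
        θ = mK.prod (Measure.dirac 1) ∨
        θ = mK.prod mK) := by
  exact ⟨fun h => forward mK θ h.1 h.2, backward mK θ⟩

end
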